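/- Let τ be an LSV-type map on [0,1]: τ(x) = x(1 + 2^α x^α) for x ∈ [0,1/2) and τ(x) = g(x) for x ∈ [1/2,1], where 0 < α < 1, g(1/2) = 0, g is increasing with g'(x) > 1. Then for every nondegenerate interval J ⊆ [0,1] there exists n ≥ 1 such that τⁿ(J) ⊇ [0,1/2]. -/

import Mathlib

/-!
Every nondegenerate interval is eventually cut by the discontinuity `1/2`, because as long as it
is not, its length grows by a factor bounded away from `1`. On the right branch this factor is
`min g' > 1` (compactness, `right_expand`). The left branch has the neutral fixed point `0`, but
an interval `(a, b)` with `b - a ≥ ℓ` has `b ≥ ℓ`, and then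
`b ^ (1 + α) - a ^ (1 + α) ≥ b ^ α * (b - a)` yields the factor `1 + 2 ^ α * ℓ ^ α`
(`leftBranch_expand`). Lengths in `[0, 1]` cannot grow geometrically forever, so some iterate of
the interval contains `1/2` in its interior, and the next image contains some `[0, δ]` with
`δ > 0`, since `g (1/2) = 0` (`exists_Icc_zero_subset`). Finally `0` is a fixed point of the left
branch, and the images of `[0, δ]` grow geometrically by the same estimate until they contain
`[0, 1/2]` (`Icc_half_subset_of_Icc`).

Open intervals are used in the first phase, so that an interval ending at `1/2` is mapped by a
single branch.
-/

open MeasureTheory Set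

noncomputable section

/-- Lebesgue measure on the unit interval `[0,1]`. -/
def mI : Measure ℝ := volume.restrict (Icc 0 1)

/-- The data of the second (expanding) branch `g : [1/2,1] → [0,1]` of an LSV-type map,
together with its derivative `g'`:  `g(1/2) = 0`, `g` is `C¹`, increasing and `g' > 1`. -/
structure LSVBranch where
  g : ℝ → ℝ
  g' : ℝ → ℝ
  map_half : g (1 / 2) = 0
  mapsTo : MapsTo g (Icc (1 / 2 : ℝ) 1) (Icc (0 : ℝ) 1)
  hasDeriv : ∀ x ∈ Icc (1 / 2 : ℝ) 1, HasDerivWithinAt g (g' x) (Icc (1 / 2 : ℝ) 1) x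
  contDeriv : ContinuousOn g' (Icc (1 / 2 : ℝ) 1)
  deriv_gt_one : ∀ x ∈ Icc (1 / 2 : ℝ) 1, 1 < g' x
  strictMono : StrictMonoOn g (Icc (1 / 2 : ℝ) 1)

/-- The LSV-type intermittent map with exponent `γ` and second branch `G.g`:
`T x = x (1 + 2^γ x^γ)` on `[0,1/2)` and `T x = g x` on `[1/2,1]`. -/
def LSVmap (γ : ℝ) (G : LSVBranch) : ℝ → ℝ :=
  fun x => if x < 1 / 2 then x * (1 + 2 ^ γ * x ^ γ) else G.g x

/-- The derivative of the LSV-type map with exponent `γ` and second branch `G`. -/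
def LSVderiv (γ : ℝ) (G : LSVBranch) : ℝ → ℝ :=
  fun x => if x < 1 / 2 then 1 + (1 + γ) * 2 ^ γ * x ^ γ else G.g' x

/-- The action `E_T` of the random map `T = {T1, T2; p1, p2}` on measures:
`(E_T ν)(A) = ∫_{T1⁻¹ A} p1 dν + ∫_{T2⁻¹ A} p2 dν`. -/
def ET (T1 T2 p1 p2 : ℝ → ℝ) (ν : Measure ℝ) : Measure ℝ :=
  (ν.withDensity fun x => ENNReal.ofReal (p1 x)).map T1
    + (ν.withDensity fun x => ENNReal.ofReal (p2 x)).map T2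

/-- `p1, p2` are measurable position-dependent probabilities on `[0,1]`. -/
def ProbPair (p1 p2 : ℝ → ℝ) : Prop :=
  Measurable p1 ∧ Measurable p2 ∧
    (∀ x ∈ Icc (0 : ℝ) 1, p1 x ∈ Icc (0 : ℝ) 1 ∧ p2 x ∈ Icc (0 : ℝ) 1) ∧
    ∀ x ∈ Icc (0 : ℝ) 1, p1 x + p2 x = 1

/-- Assumption (A) for the LSV-type map with exponent `γ`, branch `G` and probability `p`:
with `v1 x` the branch preimage of `x` in `[0,1/2)` and `v2 x` the branch preimage in
`[1/2,1]` (defined on the range of `g`), the weighted branch sums are decreasing. -/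
def AssumptionA (γ : ℝ) (G : LSVBranch) (p : ℝ → ℝ) : Prop :=
  ∃ v1 v2 : ℝ → ℝ,
    (∀ x ∈ Ico (0 : ℝ) 1, v1 x ∈ Ico (0 : ℝ) (1 / 2) ∧ LSVmap γ G (v1 x) = x) ∧
    (∀ x ∈ G.g '' Icc (1 / 2 : ℝ) 1, v2 x ∈ Icc (1 / 2 : ℝ) 1 ∧ G.g (v2 x) = x) ∧
    AntitoneOn (fun x => p (v1 x) / LSVderiv γ G (v1 x)) (Ico (0 : ℝ) 1) ∧
    AntitoneOn
      (fun x => p (v1 x) / LSVderiv γ G (v1 x) + p (v2 x) / LSVderiv γ G (v2 x))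
      (G.g '' Icc (1 / 2 : ℝ) 1)

/-- Assumption (B): the probabilities are uniformly bounded below by some `δ > 0`. -/
def AssumptionB (p1 p2 : ℝ → ℝ) : Prop :=
  ∃ δ : ℝ, 0 < δ ∧ ∀ x ∈ Icc (0 : ℝ) 1, δ ≤ p1 x ∧ δ ≤ p2 x

/-- The cone `C_A`: nonnegative decreasing integrable functions with
`∫_0^x f dm ≤ A x^(1-α) ∫_0^1 f dm`. -/
def InCone (α A : ℝ) (f : ℝ → ℝ) : Prop :=
  IntegrableOn f (Icc (0 : ℝ) 1) ∧ (∀ x ∈ Icc (0 : ℝ) 1, 0 ≤ f x) ∧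
    AntitoneOn f (Icc (0 : ℝ) 1) ∧
    ∀ x ∈ Icc (0 : ℝ) 1, ∫ t in (0 : ℝ)..x, f t ≤ A * x ^ (1 - α) * ∫ t in (0 : ℝ)..1, f t

end

noncomputable section

/-- The left branch `x ↦ x (1 + 2 ^ α x ^ α)`, as a function on the whole line; unlike `LSVmap`
it is continuous at `1/2`, with value `1` there. -/
def leftBranch (α x : ℝ) : ℝ := x * (1 + 2 ^ α * x ^ α)

lemma leftBranch_zero (α : ℝ) : leftBranch α 0 = 0 := by simp [leftBranch]

lemma leftBranch_half (α : ℝ) : leftBranch α (1 / 2) = 1 := by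
  have h : (2 : ℝ) ^ α * (1 / 2) ^ α = 1 := by
    rw [← Real.mul_rpow (by norm_num) (by norm_num)]; norm_num
  rw [leftBranch, h]; norm_num

lemma continuous_leftBranch {α : ℝ} (hα : 0 < α) : Continuous (leftBranch α) := by
  have h : Continuous fun x : ℝ => x ^ α :=
    continuous_id.rpow_const fun _ => Or.inr hα.le
  unfold leftBranch
  fun_prop

/-- The expansion of the left branch away from the neutral fixed point: it is controlled by the
right endpoint of the interval alone. -/
lemma leftBranch_expand {α l a b : ℝ} (hα : 0 < α) (hl : 0 < l) (ha : 0 ≤ a) (hab : a ≤ b)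
    (hlb : l ≤ b) :
    (1 + 2 ^ α * l ^ α) * (b - a) ≤ leftBranch α b - leftBranch α a := by
  have h1 : a ^ α ≤ b ^ α := Real.rpow_le_rpow ha hab hα.le
  have h2 : l ^ α ≤ b ^ α := Real.rpow_le_rpow hl.le hlb hα.le
  have h3 : (0 : ℝ) < 2 ^ α := Real.rpow_pos_of_pos two_pos α
  have h4 : 0 ≤ 2 ^ α * (a * (b ^ α - a ^ α)) :=
    mul_nonneg h3.le (mul_nonneg ha (sub_nonneg.2 h1))
  have h5 : 0 ≤ 2 ^ α * ((b - a) * (b ^ α - l ^ α)) :=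
    mul_nonneg h3.le (mul_nonneg (sub_nonneg.2 hab) (sub_nonneg.2 h2))
  unfold leftBranch
  linarith

lemma one_lt_leftFactor {α l : ℝ} (hl : 0 < l) : (1 : ℝ) < 1 + 2 ^ α * l ^ α := by
  have := mul_pos (Real.rpow_pos_of_pos two_pos α) (Real.rpow_pos_of_pos hl α)
  linarith

lemma LSVBranch.continuousOn (G : LSVBranch) : ContinuousOn G.g (Icc (1 / 2 : ℝ) 1) :=
  fun x hx => (G.hasDeriv x hx).continuousWithinAt

/-- The right branch is uniformly expanding, since `g'` attains its minimum. -/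
lemma right_expand (G : LSVBranch) :
    ∃ K : ℝ, 1 < K ∧ ∀ a b, 1 / 2 ≤ a → a ≤ b → b ≤ 1 → K * (b - a) ≤ G.g b - G.g a := by
  obtain ⟨x₀, hx₀, hmin⟩ :=
    isCompact_Icc.exists_isMinOn (nonempty_Icc.2 (by norm_num : (1 / 2 : ℝ) ≤ 1)) G.contDeriv
  have hd : ∀ x ∈ interior (Icc (1 / 2 : ℝ) 1), HasDerivAt G.g (G.g' x) x := fun x hx =>
    (G.hasDeriv x (interior_subset hx)).hasDerivAt (mem_interior_iff_mem_nhds.1 hx)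
  refine ⟨G.g' x₀, G.deriv_gt_one x₀ hx₀, fun a b ha hab hb => ?_⟩
  refine (convex_Icc (1 / 2 : ℝ) 1).mul_sub_le_image_sub_of_le_deriv G.continuousOn
    (fun x hx => (hd x hx).differentiableAt.differentiableWithinAt) (fun x hx => ?_)
    a ⟨ha, hab.trans hb⟩ b ⟨ha.trans hab, hb⟩ hab
  rw [(hd x hx).deriv]
  exact hmin (interior_subset hx)

lemma LSVmap_eq_left {α x : ℝ} (G : LSVBranch) (hx : x < 1 / 2) :
    LSVmap α G x = leftBranch α x := if_pos hx

lemma LSVmap_eq_right {α x : ℝ} (G : LSVBranch) (hx : 1 / 2 ≤ x) :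
    LSVmap α G x = G.g x := if_neg hx.not_gt

/-- The growth of `[0, c]` under iteration; `k` bounds the number of steps still needed. -/
lemma Icc_half_subset_of_Icc {α : ℝ} (hα : 0 < α) (G : LSVBranch) {l : ℝ} (hl : 0 < l) (k : ℕ) :
    ∀ c, l ≤ c → 1 ≤ (1 + 2 ^ α * l ^ α) ^ k * c →
      ∃ n : ℕ, Icc (0 : ℝ) (1 / 2) ⊆ (LSVmap α G)^[n] '' Icc 0 c := by
  induction k with
  | zero =>
    intro c _ h
    refine ⟨0, ?_⟩
    simp only [Function.iterate_zero, image_id]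
    exact Icc_subset_Icc_right (by linarith)
  | succ k ih =>
    intro c hlc h
    by_cases hc : 1 / 2 ≤ c
    · refine ⟨0, ?_⟩
      simp only [Function.iterate_zero, image_id]
      exact Icc_subset_Icc_right hc
    push Not at hc
    have hc0 : 0 ≤ c := hl.le.trans hlc
    have hexp := leftBranch_expand hα hl le_rfl hc0 hlc
    rw [leftBranch_zero, sub_zero, sub_zero] at hexp
    have hK := one_lt_leftFactor (α := α) hl
    have himg : Icc 0 (leftBranch α c) ⊆ LSVmap α G '' Icc 0 c := by
      have h1 := intermediate_value_Icc hc0 (continuous_leftBranch hα).continuousOn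
      rw [leftBranch_zero] at h1
      refine h1.trans (image_congr fun x hx => ?_).ge
      exact LSVmap_eq_left G (hx.2.trans_lt hc)
    obtain ⟨n, hn⟩ := ih (leftBranch α c) (by nlinarith) <| by
      refine h.trans ?_
      rw [pow_succ, mul_assoc]
      exact mul_le_mul_of_nonneg_left hexp (by positivity)
    refine ⟨n + 1, hn.trans ?_⟩
    rw [Function.iterate_succ, image_comp]
    exact image_mono himg

/-- An interval not cut by `1/2` is mapped over an interval longer by a factor `K > 1` that
depends only on a lower bound `l` for its length. -/
lemma exists_uniform_step {α : ℝ} (hα : 0 < α) (G : LSVBranch) {l : ℝ} (hl : 0 < l) :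
    ∃ K : ℝ, 1 < K ∧ ∀ a b, 0 ≤ a → b ≤ 1 → l ≤ b - a → (b ≤ 1 / 2 ∨ 1 / 2 ≤ a) →
      ∃ a' b', 0 ≤ a' ∧ b' ≤ 1 ∧ K * (b - a) ≤ b' - a' ∧
        Ioo a' b' ⊆ LSVmap α G '' Ioo a b := by
  obtain ⟨K, hK, hexp⟩ := right_expand G
  refine ⟨min K (1 + 2 ^ α * l ^ α), lt_min hK (one_lt_leftFactor hl), ?_⟩
  intro a b ha hb hlab hcase
  have hab : a ≤ b := by linarith
  rcases hcase with hb2 | ha2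
  · refine ⟨leftBranch α a, leftBranch α b, ?_, ?_, ?_, ?_⟩
    · have := Real.rpow_nonneg ha α
      unfold leftBranch
      positivity
    · have h1 := leftBranch_expand hα hl (ha.trans hab) hb2 (by linarith)
      rw [leftBranch_half] at h1
      have h2 := mul_nonneg (zero_lt_one.trans (one_lt_leftFactor (α := α) hl)).le
        (sub_nonneg.2 hb2)
      linarith
    · exact (mul_le_mul_of_nonneg_right (min_le_right _ _) (sub_nonneg.2 hab)).trans
        (leftBranch_expand hα hl ha hab (by linarith))
    · refine (intermediate_value_Ioo hab (continuous_leftBranch hα).continuousOn).trans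
        (image_congr fun x hx => ?_).ge
      exact LSVmap_eq_left G (hx.2.trans_le hb2)
  · refine ⟨G.g a, G.g b, (G.mapsTo ⟨ha2, hab.trans hb⟩).1, (G.mapsTo ⟨ha2.trans hab, hb⟩).2,
      ?_, ?_⟩
    · exact (mul_le_mul_of_nonneg_right (min_le_left _ _) (sub_nonneg.2 hab)).trans
        (hexp a b ha2 hab hb)
    · refine (intermediate_value_Ioo hab (G.continuousOn.mono (Icc_subset_Icc ha2 hb))).trans
        (image_congr fun x hx => ?_).ge
      exact LSVmap_eq_right G (ha2.trans hx.1.le)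

/-- An interval cut by `1/2` is mapped over a right neighbourhood of `g (1/2) = 0`. -/
lemma exists_Icc_zero_of_cut (α : ℝ) (G : LSVBranch) {a b : ℝ} (ha : a < 1 / 2) (hb : 1 / 2 < b)
    (hb1 : b ≤ 1) : ∃ δ : ℝ, 0 < δ ∧ Icc 0 δ ⊆ LSVmap α G '' Ioo a b := by
  obtain ⟨c, hc, hcb⟩ := exists_between hb
  have hc1 : c ≤ 1 := hcb.le.trans hb1
  refine ⟨G.g c, ?_, ?_⟩
  · rw [← G.map_half]
    exact G.strictMono ⟨le_rfl, by norm_num⟩ ⟨hc.le, hc1⟩ hc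
  · have h1 := intermediate_value_Icc hc.le (G.continuousOn.mono (Icc_subset_Icc_right hc1))
    rw [G.map_half] at h1
    intro y hy
    obtain ⟨x, hx, rfl⟩ := h1 hy
    exact ⟨x, ⟨ha.trans_le hx.1, hx.2.trans_lt hcb⟩, LSVmap_eq_right G hx.1⟩

lemma exists_Icc_zero_subset {α : ℝ} (hα : 0 < α) (G : LSVBranch) {a b : ℝ} (ha : 0 ≤ a)
    (hab : a < b) (hb : b ≤ 1) :
    ∃ n : ℕ, ∃ δ : ℝ, 0 < δ ∧ Icc 0 δ ⊆ (LSVmap α G)^[n + 1] '' Ioo a b := by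
  obtain ⟨K, hK, hstep⟩ := exists_uniform_step hα G (sub_pos.2 hab)
  have key : ∀ k : ℕ, ∀ a' b', 0 ≤ a' → b' ≤ 1 → b - a ≤ b' - a' → 1 < K ^ k * (b' - a') →
      ∃ n : ℕ, ∃ δ : ℝ, 0 < δ ∧ Icc 0 δ ⊆ (LSVmap α G)^[n + 1] '' Ioo a' b' := by
    intro k
    induction k with
    | zero =>
      -- an interval in `[0, 1]` is not longer than `1`
      intro a' b' ha' hb' _ h
      rw [pow_zero] at h
      linarith
    | succ k ih =>
      intro a' b' ha' hb' hl h
      by_cases hcut : a' < 1 / 2 ∧ 1 / 2 < b'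
      · obtain ⟨δ, hδ, hsub⟩ := exists_Icc_zero_of_cut α G hcut.1 hcut.2 hb'
        exact ⟨0, δ, hδ, by simpa using hsub⟩
      have hcase : b' ≤ 1 / 2 ∨ 1 / 2 ≤ a' := by
        by_contra! hne
        exact hcut ⟨hne.2, hne.1⟩
      obtain ⟨a'', b'', ha'', hb'', hlen, hsub⟩ := hstep a' b' ha' hb' hl hcase
      obtain ⟨n, δ, hδ, hn⟩ := ih a'' b'' ha'' hb'' (by nlinarith) <| by
        refine h.trans_le ?_
        rw [pow_succ, mul_assoc]
        exact mul_le_mul_of_nonneg_left hlen (by positivity)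
      refine ⟨n + 1, δ, hδ, hn.trans ?_⟩
      rw [Function.iterate_succ _ (n + 1), image_comp]
      exact image_mono hsub
  obtain ⟨k, hk⟩ := pow_unbounded_of_one_lt (1 / (b - a)) hK
  exact key k a b ha hb le_rfl ((div_lt_iff₀ (sub_pos.2 hab)).1 hk)

/-- **Covering property of LSV-type maps** (from the Appendix). Let `τ` be an LSV-type
map on `[0,1]` with exponent `0 < α < 1` and second branch `g` (with `g(1/2) = 0`,
`g` increasing, `g' > 1`). Then for every nondegenerate interval `J ⊆ [0,1]` there is
an `n ≥ 1` with `τⁿ(J) ⊇ [0,1/2]`. -/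
theorem LSV_interval_covers
    (α : ℝ) (hα0 : 0 < α) (hα1 : α < 1) (G : LSVBranch)
    (J : Set ℝ) (hJsub : J ⊆ Icc (0 : ℝ) 1) (hJconn : J.OrdConnected)
    (hJnondeg : ∃ a ∈ J, ∃ b ∈ J, a < b) :
    ∃ n : ℕ, 1 ≤ n ∧ Icc (0 : ℝ) (1 / 2) ⊆ (LSVmap α G)^[n] '' J := by
  obtain ⟨a, haJ, b, hbJ, hab⟩ := hJnondeg
  obtain ⟨n, δ, hδ, hn⟩ :=
    exists_Icc_zero_subset hα0 G (hJsub haJ).1 hab (hJsub hbJ).2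
  obtain ⟨k, hk⟩ := pow_unbounded_of_one_lt (1 / δ) (one_lt_leftFactor (α := α) hδ)
  obtain ⟨m, hm⟩ :=
    Icc_half_subset_of_Icc hα0 G hδ k δ le_rfl ((div_lt_iff₀ hδ).1 hk).le
  refine ⟨m + (n + 1), by omega, hm.trans ?_⟩
  rw [Function.iterate_add, image_comp]
  exact image_mono (hn.trans (image_mono (Ioo_subset_Icc_self.trans (hJconn.out haJ hbJ))))

end
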